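/- Let e ∈ {0,1,2} and let r be an integer with r ≥ e+3 and r ≡ e+1 (mod 2). Let V be an F-vector space of dimension r+3 and Q a nondegenerate quadratic form on V of Witt defect e. Let S be a spread of Q, fix Σ₀ ∈ S, a nonzero vector p ∈ Σ₀, and a hyperplane U of V with p ∉ U. Set H = U ∩ p^⊥, Π = Σ₀ ∩ H, and for each Σ ∈ S \ {Σ₀} set S_Σ = (span{p} + Σ) ∩ U. Then the restriction of Q to H is a nondegenerate quadratic form on the (r+1)-dimensional space H of Witt defect e, Π is a generator of this restriction, and the family {S_Σ : Σ ∈ S \ {Σ₀}} is a hyperbolic, parabolic or elliptic avsp for (U, H, Q|_H, Π) according as e = 0, 1 or 2. -/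

import Mathlib

open Module Submodule

section Defs

variable {F : Type*} [Field F] {V : Type*} [AddCommGroup V] [Module F V]

/-- A subspace is totally singular if the quadratic form vanishes on it. -/
def IsTotallySingular (Q : QuadraticForm F V) (W : Submodule F V) : Prop :=
  ∀ x ∈ W, Q x = 0

/-- The Witt index: maximal dimension of a totally singular subspace. -/
noncomputable def wittIndex (Q : QuadraticForm F V) : ℕ :=
  sSup {n : ℕ | ∃ W : Submodule F V, IsTotallySingular Q W ∧ Module.finrank F ↥W = n}

/-- Nondegeneracy: the only singular vector orthogonal to everything is `0`. -/
def QuadNondeg (Q : QuadraticForm F V) : Prop :=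
  ∀ v : V, Q v = 0 → (∀ x : V, QuadraticMap.polar Q v x = 0) → v = 0

/-- A generator: totally singular subspace of dimension the Witt index. -/
def IsGenerator (Q : QuadraticForm F V) (G : Submodule F V) : Prop :=
  IsTotallySingular Q G ∧ Module.finrank F ↥G = wittIndex Q

/-- A spread of `Q`. -/
def IsSpread (Q : QuadraticForm F V) (S : Set (Submodule F V)) : Prop :=
  (∀ G ∈ S, IsGenerator Q G) ∧
  (∀ G ∈ S, ∀ G' ∈ S, G ≠ G' → G ⊓ G' = ⊥) ∧
  (∀ v : V, Q v = 0 → ∃ G ∈ S, v ∈ G)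

/-- The perp of a vector with respect to the polar form of `Q`. -/
def vecPerp (Q : QuadraticForm F V) (u : V) : Submodule F V :=
  LinearMap.ker (QuadraticMap.polarBilin Q u)

/-- The perp of a subspace with respect to the polar form of `Q`. -/
def subPerp (Q : QuadraticForm F V) (G : Submodule F V) : Submodule F V :=
  ⨅ g ∈ G, vecPerp Q g

/-- Hyperbolic (e = 0), parabolic (e = 1) or elliptic (e = 2) affine vector space
partition for `(U, H, Q, Pgen)`. -/
def IsAvsp [Fintype F] (e r : ℕ) {U : Type*} [AddCommGroup U] [Module F U]
    (H : Submodule F U) (Q : QuadraticForm F ↥H) (Pgen : Submodule F ↥H)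
    (P : Set (Submodule F U)) : Prop :=
  P.ncard = Fintype.card F ^ ((r + e + 1) / 2) ∧
  (∀ S ∈ P, Module.finrank F ↥S = (r + 3 - e) / 2 ∧ ¬ S ≤ H) ∧
  (∀ L : Submodule F U, Module.finrank F ↥L = 1 → ¬ L ≤ H → ∃! S, S ∈ P ∧ L ≤ S) ∧
  (∀ S ∈ P, IsGenerator Q (S.comap H.subtype) ∧ S.comap H.subtype ⊓ Pgen = ⊥) ∧
  (∀ S ∈ P, ∀ T ∈ P, S ≠ T → S.comap H.subtype ≠ T.comap H.subtype) ∧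
  (∀ S ∈ P, ∀ T ∈ P, S ≠ T → Module.finrank F ↥(S ⊓ T) ≤ 1) ∧
  (∀ S ∈ P, ∀ T ∈ P, S ≠ T →
    Module.finrank F ↥(S.comap H.subtype ⊓ T.comap H.subtype) = 1 →
      QuadNondeg (Q.comp ((S ⊔ T).comap H.subtype).subtype) ∧
      Module.finrank F ↥((S ⊔ T).comap H.subtype) =
        2 * wittIndex (Q.comp ((S ⊔ T).comap H.subtype).subtype))

end Defs

/-!
For a singular vector `p`, the form induced on the residue `p^⊥ / ⟨p⟩` is nondegenerate of the same
Witt defect as `Q`, with Witt index one less; since `p ∉ U`, the subspace `H = U ∩ p^⊥` is a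
complement of `⟨p⟩` in `p^⊥` and therefore a model of this residue. Each `S_Σ` is the projection of
`Σ` from `p` into `U`, and `S_Σ ∩ H` is the generator of the residue obtained from
`(⟨p⟩ + Σ) ∩ p^⊥`.

A line through `⟨p⟩` that is not contained in `p^⊥` carries exactly one further singular point,
and this point lies in exactly one element of the spread: this gives the partition of the points of
`U` outside `H`. Counting vectors then determines the number of the `S_Σ`.

If `p` lies in neither `Σ` nor `Σ'` and `Σ ∩ Σ' = 0`, then `S_Σ ∩ S_Σ'` has the same dimension as
`(Σ + Σ') ∩ ⟨p⟩`. When this dimension is one, `p` lies in the hyperbolic space `Σ + Σ'`, whose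
residue at `p` is `(S_Σ + S_Σ') ∩ H`, hence again hyperbolic.
-/

section LinearAlgebra

variable {F V M : Type*} [Field F] [AddCommGroup V] [Module F V] [AddCommGroup M] [Module F M]

theorem mem_span_singleton_sup_iff_sub_smul_mem {X : Submodule F V} {p v : V} :
    v ∈ span F {p} ⊔ X ↔ ∃ a : F, v - a • p ∈ X := by
  simp only [mem_sup, mem_span_singleton, exists_exists_eq_and]
  exact exists_congr fun a =>
    ⟨by rintro ⟨x, hx, rfl⟩; simpa using hx, fun h => ⟨_, h, add_sub_cancel _ _⟩⟩

theorem map_projectionOnto_eq_comap_subtype {U W : Submodule F V} (h : IsCompl U W)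
    (X : Submodule F V) : X.map (U.projectionOnto W h) = (W ⊔ X).comap U.subtype := by
  have hcomap := comap_map_eq (U.projectionOnto W h) X
  rw [ker_projectionOnto, sup_comm] at hcomap
  rw [← hcomap, ← comap_comp, projectionOnto_comp_subtype, comap_id]

theorem existsUnique_le_of_finrank_eq_one {P : Set (Submodule F V)} {H L : Submodule F V}
    (hP : ∀ v ∉ H, ∃! X, X ∈ P ∧ v ∈ X) (hL : finrank F L = 1) (hLH : ¬ L ≤ H) :
    ∃! X, X ∈ P ∧ L ≤ X := by
  obtain ⟨v, hvL, hvH⟩ := SetLike.not_le_iff_exists.1 hLH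
  have hv : v ≠ 0 := (ne_of_mem_of_not_mem H.zero_mem hvH).symm
  have hspan : span F {v} = L :=
    have := finite_of_finrank_eq_succ hL
    eq_of_le_of_finrank_eq ((span_singleton_le_iff_mem _ _).2 hvL) <| by
      rw [finrank_span_singleton hv, hL]
  simpa only [← hspan, span_singleton_le_iff_mem] using hP v hvH

variable [FiniteDimensional F V]

theorem isCompl_span_singleton_of_finrank_add_one {U : Submodule F V} {p : V}
    (hU : finrank F U + 1 = finrank F V) (hp : p ∉ U) : IsCompl U (span F {p}) :=
  have hp0 : p ≠ 0 := (ne_of_mem_of_not_mem U.zero_mem hp).symm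
  (isCompl_iff_disjoint _ _ <| by rw [finrank_span_singleton hp0, hU]).2
    (disjoint_span_singleton_of_notMem hp)

theorem finrank_map_add_finrank_inf_ker (f : V →ₗ[F] M) (X : Submodule F V) :
    finrank F ↥(X.map f) + finrank F ↥(X ⊓ LinearMap.ker f) = finrank F X := by
  rw [← (f.domRestrict X).finrank_range_add_finrank_ker, LinearMap.range_domRestrict,
    LinearMap.ker_domRestrict, ← map_comap_subtype, finrank_map_subtype_eq]

theorem finrank_map_of_disjoint_ker {f : V →ₗ[F] M} {X : Submodule F V}
    (hX : Disjoint X (LinearMap.ker f)) : finrank F ↥(X.map f) = finrank F X := by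
  rw [← finrank_map_add_finrank_inf_ker f X, hX.eq_bot, finrank_bot, add_zero]

theorem finrank_map_inf_map {f : V →ₗ[F] M} {X Y : Submodule F V}
    (hX : Disjoint X (LinearMap.ker f)) (hY : Disjoint Y (LinearMap.ker f)) (hXY : Disjoint X Y) :
    finrank F ↥(X.map f ⊓ Y.map f) = finrank F ↥((X ⊔ Y) ⊓ LinearMap.ker f) := by
  have hsup := finrank_sup_add_finrank_inf_eq X Y
  have hmap := finrank_sup_add_finrank_inf_eq (X.map f) (Y.map f)
  have hker := finrank_map_add_finrank_inf_ker f (X ⊔ Y)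
  rw [hXY.eq_bot, finrank_bot] at hsup
  rw [← Submodule.map_sup, finrank_map_of_disjoint_ker hX, finrank_map_of_disjoint_ker hY] at hmap
  omega

theorem finrank_le_finrank_inf_ker_add_one (φ : V →ₗ[F] F) (X : Submodule F V) :
    finrank F X ≤ finrank F ↥(X ⊓ LinearMap.ker φ) + 1 := by
  have hle := (X.map φ).finrank_le
  rw [finrank_self] at hle
  have := finrank_map_add_finrank_inf_ker φ X
  omega

theorem finrank_inf_add_one_of_not_le {H X : Submodule F V} (hH : finrank F H + 1 = finrank F V)
    (hX : ¬ X ≤ H) : finrank F ↥(X ⊓ H) + 1 = finrank F X := by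
  have hlt := finrank_lt_finrank_of_lt (right_lt_sup.2 hX)
  have hle := (X ⊔ H).finrank_le
  have := finrank_sup_add_finrank_inf_eq X H
  omega

end LinearAlgebra

section Counting

variable {F V : Type*} [Field F] [AddCommGroup V] [Module F V] [FiniteDimensional F V]

theorem ncard_coe_eq_pow_finrank (X : Submodule F V) :
    (X : Set V).ncard = Nat.card F ^ finrank F X := by
  rw [← Module.natCard_eq_pow_finrank, ← Nat.card_coe_set_eq, SetLike.coe_sort_coe]

variable [Finite F]

theorem ncard_sdiff_of_not_le {H X : Submodule F V} {k : ℕ} (hH : finrank F H + 1 = finrank F V)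
    (hX : finrank F X = k + 1) (hXH : ¬ X ≤ H) :
    ((X : Set V) \ H).ncard = Nat.card F ^ k * (Nat.card F - 1) := by
  have : Finite V := Module.finite_of_finite F
  have hinf : finrank F ↥(X ⊓ H) = k := by
    have := finrank_inf_add_one_of_not_le hH hXH
    omega
  rw [← Set.sdiff_self_inter, ← coe_inf, Set.ncard_sdiff (by simp), ncard_coe_eq_pow_finrank,
    ncard_coe_eq_pow_finrank, hX, hinf, pow_succ, Nat.mul_sub, mul_one]

theorem ncard_mul_pow_eq_pow_finrank {H : Submodule F V} {P : Set (Submodule F V)} {k : ℕ}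
    (hH : finrank F H + 1 = finrank F V) (hk : ∀ X ∈ P, finrank F X = k + 1 ∧ ¬ X ≤ H)
    (hP : ∀ v ∉ H, ∃! X, X ∈ P ∧ v ∈ X) :
    P.ncard * Nat.card F ^ k = Nat.card F ^ finrank F H := by
  have : Finite V := Module.finite_of_finite F
  have htop : ¬ ⊤ ≤ H := fun h => by
    rw [top_le_iff.1 h, finrank_top] at hH
    omega
  have hcover : ((⊤ : Submodule F V) : Set V) \ H = ⋃ X ∈ P, (X : Set V) \ H := by
    ext v
    simp only [top_coe, Set.mem_sdiff, Set.mem_univ, true_and, Set.mem_iUnion, exists_and_left,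
      SetLike.mem_coe, exists_prop]
    exact ⟨fun hv => let ⟨X, hX, _⟩ := hP v hv; ⟨X, hX.2, hX.1, hv⟩, fun ⟨_, _, _, hv⟩ => hv⟩
  have hdisj : P.PairwiseDisjoint fun X => (X : Set V) \ H := fun X hX Y hY hXY =>
    Set.disjoint_left.2 fun v hvX hvY =>
      hXY ((hP v hvX.2).unique ⟨hX, hvX.1⟩ ⟨hY, hvY.1⟩)
  have hcount := congrArg Set.ncard hcover
  rw [P.toFinite.ncard_biUnion (fun _ _ => Set.toFinite _) hdisj,
    finsum_mem_congr rfl fun X hX => ncard_sdiff_of_not_le hH (hk X hX).1 (hk X hX).2,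
    ncard_sdiff_of_not_le hH (by rw [finrank_top, hH]) htop,
    finsum_mem_eq_finite_toFinset_sum _ P.toFinite, Finset.sum_const,
    ← Set.ncard_eq_toFinset_card, smul_eq_mul, ← mul_assoc] at hcount
  exact (Nat.eq_of_mul_eq_mul_right (Nat.sub_pos_of_lt Finite.one_lt_card) hcount).symm

end Counting

section QuadraticForm

variable {F V : Type*} [Field F] [AddCommGroup V] [Module F V] {Q : QuadraticForm F V}

theorem mem_vecPerp {u x : V} : x ∈ vecPerp Q u ↔ QuadraticMap.polar Q u x = 0 := Iff.rfl

theorem self_mem_vecPerp {p : V} (hp : Q p = 0) : p ∈ vecPerp Q p := by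
  simp [mem_vecPerp, QuadraticMap.polar_self, hp]

theorem map_sub_smul_of_map_eq_zero {p : V} (hp : Q p = 0) (v : V) (a : F) :
    Q (v - a • p) = Q v - a * QuadraticMap.polar Q p v := by
  rw [sub_eq_add_neg, QuadraticMap.map_add Q, QuadraticMap.map_neg, QuadraticMap.map_smul, hp,
    QuadraticMap.polar_neg_right, QuadraticMap.polar_smul_right, QuadraticMap.polar_comm]
  simp [sub_eq_add_neg]

namespace IsTotallySingular

variable {M : Type*} [AddCommGroup M] [Module F M] {W : Submodule F V}

theorem comap (hW : IsTotallySingular Q W) (f : M →ₗ[F] V) :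
    IsTotallySingular (Q.comp f) (W.comap f) :=
  fun x hx => hW (f x) hx

theorem map {f : M →ₗ[F] V} {Y : Submodule F M} (hY : IsTotallySingular (Q.comp f) Y) :
    IsTotallySingular Q (Y.map f) := by
  rintro _ ⟨x, hx, rfl⟩
  exact hY x hx

theorem le_vecPerp (hW : IsTotallySingular Q W) {x : V} (hx : x ∈ W) : W ≤ vecPerp Q x := by
  intro y hy
  simp [mem_vecPerp, QuadraticMap.polar, hW _ hx, hW _ hy, hW _ (W.add_mem hx hy)]

theorem span_singleton_sup_inf_vecPerp (hW : IsTotallySingular Q W) {p : V} (hp : Q p = 0) :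
    IsTotallySingular Q ((span F {p} ⊔ W) ⊓ vecPerp Q p) := by
  rintro x ⟨hx, hxp⟩
  obtain ⟨a, ha⟩ := mem_span_singleton_sup_iff_sub_smul_mem.1 hx
  have hQ := hW _ ha
  rwa [map_sub_smul_of_map_eq_zero hp, mem_vecPerp.1 hxp, mul_zero, sub_zero] at hQ

theorem span_singleton_sup (hW : IsTotallySingular Q W) {p : V} (hp : Q p = 0)
    (hWp : W ≤ vecPerp Q p) : IsTotallySingular Q (span F {p} ⊔ W) := by
  have hle : span F {p} ⊔ W ≤ vecPerp Q p :=
    sup_le ((span_singleton_le_iff_mem _ _).2 (self_mem_vecPerp hp)) hWp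
  simpa only [inf_eq_left.2 hle] using hW.span_singleton_sup_inf_vecPerp hp

variable [FiniteDimensional F V]

theorem finrank_le_wittIndex (hW : IsTotallySingular Q W) : finrank F W ≤ wittIndex Q :=
  le_csSup ⟨finrank F V, by rintro _ ⟨X, -, rfl⟩; exact X.finrank_le⟩ ⟨W, hW, rfl⟩

theorem isGenerator_of_wittIndex_le (hW : IsTotallySingular Q W) (h : wittIndex Q ≤ finrank F W) :
    IsGenerator Q W :=
  ⟨hW, hW.finrank_le_wittIndex.antisymm h⟩

end IsTotallySingular

variable [FiniteDimensional F V]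

theorem exists_isGenerator (Q : QuadraticForm F V) : ∃ G, IsGenerator Q G :=
  Nat.sSup_mem (s := {n | ∃ W, IsTotallySingular Q W ∧ finrank F W = n})
    ⟨0, ⊥, by simp [IsTotallySingular], finrank_bot F V⟩
    ⟨finrank F V, by rintro _ ⟨X, -, rfl⟩; exact X.finrank_le⟩

theorem wittIndex_comp_le_of_injective {M : Type*} [AddCommGroup M] [Module F M]
    [FiniteDimensional F M] {f : M →ₗ[F] V} (hf : Function.Injective f) :
    wittIndex (Q.comp f) ≤ wittIndex Q := by
  obtain ⟨G, hG, hGw⟩ := exists_isGenerator (Q.comp f)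
  rw [← hGw, (equivMapOfInjective f hf G).finrank_eq]
  exact hG.map.finrank_le_wittIndex

theorem finrank_vecPerp_add_one (hQ : QuadNondeg Q) {p : V} (hp : Q p = 0) (hp0 : p ≠ 0) :
    finrank F (vecPerp Q p) + 1 = finrank F V :=
  Module.Dual.finrank_ker_add_one_of_ne_zero fun h =>
    hp0 (hQ p hp fun x => LinearMap.congr_fun h x)

theorem finrank_le_finrank_span_singleton_sup_inf_vecPerp (Q : QuadraticForm F V) {p : V}
    (W : Submodule F V) (h : p ∈ W → W ≤ vecPerp Q p) :
    finrank F W ≤ finrank F ↥((span F {p} ⊔ W) ⊓ vecPerp Q p) := by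
  by_cases hpW : p ∈ W
  · exact finrank_mono (le_inf le_sup_right (h hpW))
  · have hsup := finrank_sup_span_singleton hpW
    rw [sup_comm] at hsup
    have : finrank F ↥(span F {p} ⊔ W) ≤ finrank F ↥((span F {p} ⊔ W) ⊓ vecPerp Q p) + 1 :=
      finrank_le_finrank_inf_ker_add_one _ _
    omega

namespace IsGenerator

variable {G G' : Submodule F V}

theorem mem_of_le_vecPerp (hG : IsGenerator Q G) {p : V} (hp : Q p = 0) (hGp : G ≤ vecPerp Q p) :
    p ∈ G := by
  by_contra hpG
  have hle := (hG.1.span_singleton_sup hp hGp).finrank_le_wittIndex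
  rw [sup_comm, finrank_sup_span_singleton hpG, hG.2] at hle
  omega

theorem span_singleton_sup_inf_vecPerp (hG : IsGenerator Q G) {p : V} (hp : Q p = 0) :
    IsGenerator Q ((span F {p} ⊔ G) ⊓ vecPerp Q p) :=
  (hG.1.span_singleton_sup_inf_vecPerp hp).isGenerator_of_wittIndex_le <|
    hG.2 ▸ finrank_le_finrank_span_singleton_sup_inf_vecPerp Q G fun hpG => hG.1.le_vecPerp hpG

theorem wittIndex_comp_subtype_of_le (hG : IsGenerator Q G) {K : Submodule F V} (hGK : G ≤ K) :
    wittIndex (Q.comp K.subtype) = wittIndex Q := by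
  refine (wittIndex_comp_le_of_injective K.injective_subtype).antisymm ?_
  rw [← hG.2, ← (comapSubtypeEquivOfLe hGK).finrank_eq]
  exact (hG.1.comap K.subtype).finrank_le_wittIndex

theorem eq_zero_of_le_vecPerp (hG : IsGenerator Q G) (hG' : IsGenerator Q G')
    (hGG' : G ⊓ G' = ⊥) {g : V} (hg : g ∈ G) (h : G' ≤ vecPerp Q g) : g = 0 :=
  (mem_bot F).1 <| hGG' ▸ ⟨hg, hG'.mem_of_le_vecPerp (hG.1 g hg) h⟩

theorem quadNondeg_comp_subtype_sup (hG : IsGenerator Q G) (hG' : IsGenerator Q G')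
    (hGG' : G ⊓ G' = ⊥) : QuadNondeg (Q.comp (G ⊔ G').subtype) := by
  rintro ⟨v, hv⟩ - hperp
  have hv_perp : ∀ x ∈ G ⊔ G', QuadraticMap.polar Q v x = 0 := fun x hx => hperp ⟨x, hx⟩
  obtain ⟨g, hg, g', hg', rfl⟩ := mem_sup.1 hv
  have hg0 : g = 0 := hG.eq_zero_of_le_vecPerp hG' hGG' hg fun x hx => by
    have h := hv_perp x (mem_sup_right hx)
    rwa [QuadraticMap.polar_add_left, mem_vecPerp.1 (hG'.1.le_vecPerp hg' hx), add_zero] at h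
  have hg0' : g' = 0 := hG'.eq_zero_of_le_vecPerp hG (inf_comm G G' ▸ hGG') hg' fun x hx => by
    have h := hv_perp x (mem_sup_left hx)
    rwa [QuadraticMap.polar_add_left, mem_vecPerp.1 (hG.1.le_vecPerp hg hx), zero_add] at h
  exact Subtype.ext (show g + g' = 0 by rw [hg0, hg0', add_zero])

end IsGenerator

/-- `Q` is nondegenerate of Witt defect `e`. For `e = 0` the second component unfolds to
`finrank F V = 2 * wittIndex Q`, the form in which `IsAvsp` states it. -/
def IsNondegOfDefect (Q : QuadraticForm F V) (e : ℕ) : Prop :=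
  QuadNondeg Q ∧ finrank F V = 2 * wittIndex Q + e

theorem IsGenerator.isNondegOfDefect_zero_sup {G G' : Submodule F V} (hG : IsGenerator Q G)
    (hG' : IsGenerator Q G') (hGG' : G ⊓ G' = ⊥) :
    IsNondegOfDefect (Q.comp (G ⊔ G').subtype) 0 := by
  refine ⟨hG.quadNondeg_comp_subtype_sup hG' hGG', ?_⟩
  have hdim := finrank_sup_add_finrank_inf_eq G G'
  rw [hGG', finrank_bot, hG.2, hG'.2] at hdim
  rw [hG.wittIndex_comp_subtype_of_le le_sup_left]
  omega

end QuadraticForm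

section PointResidue

variable {F V M : Type*} [Field F] [AddCommGroup V] [Module F V] [AddCommGroup M] [Module F M]

/-- `f` embeds `M` as a complement of the singular point `⟨p⟩` in `p^⊥`, so that `Q.comp f` is a
model of the form which `Q` induces on the residue `p^⊥ / ⟨p⟩`. -/
structure IsPointResidue (Q : QuadraticForm F V) (p : V) (f : M →ₗ[F] V) : Prop where
  map_eq_zero : Q p = 0
  injective : Function.Injective f
  notMem_range : p ∉ LinearMap.range f
  span_singleton_sup_range : span F {p} ⊔ LinearMap.range f = vecPerp Q p

namespace IsPointResidue

variable {Q : QuadraticForm F V} {p : V} {f : M →ₗ[F] V}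

theorem range_le (hf : IsPointResidue Q p f) : LinearMap.range f ≤ vecPerp Q p :=
  hf.span_singleton_sup_range ▸ le_sup_right

theorem ne_zero (hf : IsPointResidue Q p f) : p ≠ 0 :=
  fun h => hf.notMem_range (h ▸ zero_mem _)

theorem comap_span_singleton (hf : IsPointResidue Q p f) : (span F {p}).comap f = ⊥ := by
  refine (Submodule.eq_bot_iff _).2 fun x hx => hf.injective ?_
  rw [map_zero]
  exact disjoint_def.1 (disjoint_span_singleton_of_notMem hf.notMem_range) _ ⟨x, rfl⟩ hx

theorem comap_span_singleton_sup_inf_comap (hf : IsPointResidue Q p f) {G G₀ : Submodule F V}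
    (hGG₀ : G ⊓ G₀ = ⊥) (hp : p ∈ G₀) : (span F {p} ⊔ G).comap f ⊓ G₀.comap f = ⊥ := by
  rw [← comap_inf, sup_inf_assoc_of_le _ ((span_singleton_le_iff_mem _ _).2 hp), hGG₀, sup_bot_eq,
    hf.comap_span_singleton]

theorem comap_inf_vecPerp (hf : IsPointResidue Q p f) (X : Submodule F V) :
    (X ⊓ vecPerp Q p).comap f = X.comap f :=
  (comap_inf _ _ f).trans (inf_eq_left.2 fun x _ => hf.range_le ⟨x, rfl⟩)

theorem submoduleComap (hf : IsPointResidue Q p f) {K : Submodule F V} (hpK : p ∈ K) :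
    IsPointResidue (Q.comp K.subtype) ⟨p, hpK⟩ (f.submoduleComap K) where
  map_eq_zero := hf.map_eq_zero
  injective x y h := Subtype.ext (hf.injective (congrArg Subtype.val h))
  notMem_range := by
    rintro ⟨x, hx⟩
    exact hf.notMem_range ⟨x, congrArg Subtype.val hx⟩
  span_singleton_sup_range := by
    ext ⟨v, hv⟩
    have hmem : v ∈ span F {p} ⊔ LinearMap.range f ↔ v ∈ vecPerp Q p := by
      rw [hf.span_singleton_sup_range]
    refine Iff.trans ?_ hmem
    simp only [mem_span_singleton_sup_iff_sub_smul_mem]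
    refine exists_congr fun a => ⟨fun ⟨x, hx⟩ => ⟨x, congrArg Subtype.val hx⟩, fun ⟨x, hx⟩ => ?_⟩
    have hxK : f x ∈ K := hx ▸ K.sub_mem hv (K.smul_mem a hpK)
    exact ⟨⟨x, hxK⟩, Subtype.ext hx⟩

theorem quadNondeg_comp (hf : IsPointResidue Q p f) (hQ : QuadNondeg Q) :
    QuadNondeg (Q.comp f) := by
  intro v hv hperp
  have hpv : QuadraticMap.polar Q p (f v) = 0 := hf.range_le ⟨v, rfl⟩
  have hker : vecPerp Q p ≤ vecPerp Q (f v) := by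
    rw [← hf.span_singleton_sup_range, sup_le_iff, span_singleton_le_iff_mem]
    refine ⟨mem_vecPerp.2 (by rwa [QuadraticMap.polar_comm]), ?_⟩
    rintro _ ⟨x, rfl⟩
    simpa [mem_vecPerp, QuadraticMap.polar] using hperp x
  -- `B(f v, ·)` vanishes on the kernel of `B(p, ·)`, so it is a multiple of it.
  have hspan := mem_span_of_iInf_ker_le_ker (L := fun _ : Unit => QuadraticMap.polarBilin Q p)
    (K := QuadraticMap.polarBilin Q (f v)) (by rwa [ciInf_const])
  rw [Set.range_const, mem_span_singleton] at hspan
  obtain ⟨c, hc⟩ := hspan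
  have hfv : f v - c • p = 0 := by
    refine hQ _ ?_ fun x => ?_
    · rw [map_sub_smul_of_map_eq_zero hf.map_eq_zero, hpv, mul_zero, sub_zero]
      exact hv
    · rw [QuadraticMap.polar_sub_left, QuadraticMap.polar_smul_left, sub_eq_zero]
      exact (LinearMap.congr_fun hc x).symm
  have hv_mem : v ∈ (span F {p}).comap f :=
    mem_span_singleton.2 ⟨c, (sub_eq_zero.1 hfv).symm⟩
  rwa [hf.comap_span_singleton] at hv_mem

variable [FiniteDimensional F V]

theorem finrank_comap_add_one (hf : IsPointResidue Q p f) {X : Submodule F V} (hpX : p ∈ X)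
    (hX : X ≤ vecPerp Q p) : finrank F ↥(X.comap f) + 1 = finrank F X := by
  have hXeq : LinearMap.range f ⊓ X ⊔ span F {p} = X := by
    rw [sup_comm, ← sup_inf_assoc_of_le _ ((span_singleton_le_iff_mem _ _).2 hpX),
      hf.span_singleton_sup_range, inf_eq_right.2 hX]
  rw [(equivMapOfInjective f hf.injective _).finrank_eq, map_comap_eq,
    ← finrank_sup_span_singleton fun h => hf.notMem_range (mem_inf.1 h).1, hXeq]

theorem finrank_add_two (hf : IsPointResidue Q p f) (hQ : QuadNondeg Q) :
    finrank F M + 2 = finrank F V := by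
  rw [← finrank_vecPerp_add_one hQ hf.map_eq_zero hf.ne_zero,
    ← hf.finrank_comap_add_one (self_mem_vecPerp hf.map_eq_zero) le_rfl,
    top_le_iff.1 (LinearMap.range_le_iff_comap.1 hf.range_le).ge, finrank_top]

variable [FiniteDimensional F M]

theorem wittIndex_comp_add_one (hf : IsPointResidue Q p f) :
    wittIndex (Q.comp f) + 1 = wittIndex Q := by
  apply le_antisymm
  · obtain ⟨Y, hY, hYw⟩ := exists_isGenerator (Q.comp f)
    rw [← hYw, (equivMapOfInjective f hf.injective Y).finrank_eq,
      ← finrank_sup_span_singleton fun h => hf.notMem_range (LinearMap.map_le_range h), sup_comm]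
    exact (hY.map.span_singleton_sup hf.map_eq_zero
      (LinearMap.map_le_range.trans hf.range_le)).finrank_le_wittIndex
  · obtain ⟨G, hG⟩ := exists_isGenerator Q
    have hGp := hG.span_singleton_sup_inf_vecPerp hf.map_eq_zero
    have hp : p ∈ (span F {p} ⊔ G) ⊓ vecPerp Q p :=
      ⟨mem_sup_left (mem_span_singleton_self p), self_mem_vecPerp hf.map_eq_zero⟩
    rw [← hGp.2, ← hf.finrank_comap_add_one hp inf_le_right, add_le_add_iff_right]
    exact (hGp.1.comap f).finrank_le_wittIndex

theorem isNondegOfDefect_comp (hf : IsPointResidue Q p f) {e : ℕ} (hQ : IsNondegOfDefect Q e) :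
    IsNondegOfDefect (Q.comp f) e := by
  refine ⟨hf.quadNondeg_comp hQ.1, ?_⟩
  have hdim := hf.finrank_add_two hQ.1
  have hw := hf.wittIndex_comp_add_one
  have := hQ.2
  omega

theorem isGenerator_comap (hf : IsPointResidue Q p f) {G : Submodule F V} (hG : IsGenerator Q G)
    (hpG : p ∈ G) : IsGenerator (Q.comp f) (G.comap f) := by
  refine ⟨hG.1.comap f, ?_⟩
  have hdim := hf.finrank_comap_add_one hpG (hG.1.le_vecPerp hpG)
  have hw := hf.wittIndex_comp_add_one
  have := hG.2
  omega

theorem isGenerator_comap_span_singleton_sup (hf : IsPointResidue Q p f) {G : Submodule F V}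
    (hG : IsGenerator Q G) : IsGenerator (Q.comp f) ((span F {p} ⊔ G).comap f) := by
  rw [← hf.comap_inf_vecPerp]
  exact hf.isGenerator_comap (hG.span_singleton_sup_inf_vecPerp hf.map_eq_zero)
    ⟨mem_sup_left (mem_span_singleton_self p), self_mem_vecPerp hf.map_eq_zero⟩

theorem isNondegOfDefect_zero_comap_sup (hf : IsPointResidue Q p f) {G G' : Submodule F V}
    (hG : IsGenerator Q G) (hG' : IsGenerator Q G') (hGG' : G ⊓ G' = ⊥) (hp : p ∈ G ⊔ G') :
    IsNondegOfDefect ((Q.comp f).comp ((G ⊔ G').comap f).subtype) 0 :=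
  (hf.submoduleComap hp).isNondegOfDefect_comp (hG.isNondegOfDefect_zero_sup hG' hGG')

end IsPointResidue

end PointResidue

section Spread

variable {F V : Type*} [Field F] [AddCommGroup V] [Module F V] {Q : QuadraticForm F V}
  {S : Set (Submodule F V)} {p v : V}

namespace IsSpread

theorem existsUnique_mem (hS : IsSpread Q S) (hv : Q v = 0) (hv0 : v ≠ 0) :
    ∃! G, G ∈ S ∧ v ∈ G := by
  obtain ⟨G, hG, hvG⟩ := hS.2.2 v hv
  refine ⟨G, ⟨hG, hvG⟩, fun G' ⟨hG', hvG'⟩ => ?_⟩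
  by_contra hne
  exact hv0 ((mem_bot F).1 (hS.2.1 G' hG' G hG hne ▸ ⟨hvG', hvG⟩))

theorem existsUnique_mem_span_singleton_sup (hS : IsSpread Q S) (hp : Q p = 0)
    (hv : v ∉ vecPerp Q p) : ∃! G, G ∈ S ∧ v ∈ span F {p} ⊔ G := by
  have hpv : QuadraticMap.polar Q p v ≠ 0 := hv
  have hsing (a : F) : Q (v - a • p) = 0 ↔ a = Q v / QuadraticMap.polar Q p v := by
    rw [map_sub_smul_of_map_eq_zero hp, sub_eq_zero, eq_div_iff hpv, eq_comm]
  -- `v - c • p` spans the only singular point other than `⟨p⟩` on the line through `p` and `v`.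
  set c := Q v / QuadraticMap.polar Q p v
  have hmem : ∀ G ∈ S, (v ∈ span F {p} ⊔ G ↔ v - c • p ∈ G) := fun G hG => by
    rw [mem_span_singleton_sup_iff_sub_smul_mem]
    exact ⟨fun ⟨a, ha⟩ => (hsing a).1 ((hS.1 G hG).1 _ ha) ▸ ha, fun h => ⟨c, h⟩⟩
  have hne : v - c • p ≠ 0 := fun h =>
    hv (sub_eq_zero.1 h ▸ smul_mem _ c (self_mem_vecPerp hp))
  refine (existsUnique_congr fun G => and_congr_right (hmem G)).2 ?_
  exact hS.existsUnique_mem ((hsing c).2 rfl) hne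

end IsSpread

end Spread

section Projection

variable {F V : Type*} [Field F] [AddCommGroup V] [Module F V] {U X Y : Submodule F V} {p : V}

/-- The projection of `X` from the point `⟨p⟩` into the hyperplane `U`; this is `S_Σ` for
`X = Σ`. -/
def projFrom (p : V) (U X : Submodule F V) : Submodule F U :=
  (span F {p} ⊔ X).comap U.subtype

theorem projFrom_sup (hU : IsCompl U (span F {p})) (X Y : Submodule F V) :
    projFrom p U (X ⊔ Y) = projFrom p U X ⊔ projFrom p U Y := by
  simp only [projFrom, ← map_projectionOnto_eq_comap_subtype hU, Submodule.map_sup]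

variable [FiniteDimensional F V]

theorem finrank_projFrom (hU : IsCompl U (span F {p})) (hX : p ∉ X) :
    finrank F (projFrom p U X) = finrank F X := by
  rw [projFrom, ← map_projectionOnto_eq_comap_subtype hU, finrank_map_of_disjoint_ker]
  exact (ker_projectionOnto hU).symm ▸ disjoint_span_singleton_of_notMem hX

theorem finrank_projFrom_inf (hU : IsCompl U (span F {p})) (hX : p ∉ X) (hY : p ∉ Y)
    (hXY : X ⊓ Y = ⊥) :
    finrank F ↥(projFrom p U X ⊓ projFrom p U Y) = finrank F ↥((X ⊔ Y) ⊓ span F {p}) := by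
  have hker := ker_projectionOnto hU
  rw [projFrom, projFrom, ← map_projectionOnto_eq_comap_subtype hU,
    ← map_projectionOnto_eq_comap_subtype hU, finrank_map_inf_map, hker]
  exacts [hker.symm ▸ disjoint_span_singleton_of_notMem hX,
    hker.symm ▸ disjoint_span_singleton_of_notMem hY, disjoint_iff.2 hXY]

theorem finrank_projFrom_inf_le_one (hU : IsCompl U (span F {p})) (hX : p ∉ X) (hY : p ∉ Y)
    (hXY : X ⊓ Y = ⊥) : finrank F ↥(projFrom p U X ⊓ projFrom p U Y) ≤ 1 :=
  (finrank_projFrom_inf hU hX hY hXY).trans_le <|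
    (finrank_mono inf_le_right).trans (by simpa using finrank_span_le_card (R := F) {p})

theorem mem_sup_of_projFrom_inf_ne_bot (hU : IsCompl U (span F {p})) (hX : p ∉ X) (hY : p ∉ Y)
    (hXY : X ⊓ Y = ⊥) (h : projFrom p U X ⊓ projFrom p U Y ≠ ⊥) : p ∈ X ⊔ Y := by
  by_contra hp
  have hdim := finrank_projFrom_inf hU hX hY hXY
  rw [(disjoint_span_singleton_of_notMem hp).eq_bot, finrank_bot, finrank_eq_zero] at hdim
  exact h hdim

end Projection

section Avsp

variable {F V : Type*} [Field F] [AddCommGroup V] [Module F V] {Q : QuadraticForm F V}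
  {U : Submodule F V} {p : V}

/-- The hyperplane `H = U ∩ p^⊥` of `U`, encoded as a subspace of `U`. -/
abbrev perpIn (Q : QuadraticForm F V) (p : V) (U : Submodule F V) : Submodule F U :=
  (vecPerp Q p).comap U.subtype

/-- The inclusion of `H = U ∩ p^⊥` into `V`; composing `Q` with it gives the restriction of `Q`
to `H`. -/
abbrev perpIncl (Q : QuadraticForm F V) (p : V) (U : Submodule F V) : perpIn Q p U →ₗ[F] V :=
  U.subtype ∘ₗ (perpIn Q p U).subtype

theorem isPointResidue_perpIncl (hp : Q p = 0) (hp0 : p ≠ 0) (hU : IsCompl U (span F {p})) :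
    IsPointResidue Q p (perpIncl Q p U) := by
  have hpU : p ∉ U := (disjoint_span_singleton' hp0).1 hU.disjoint
  have hrange : LinearMap.range (perpIncl Q p U) = U ⊓ vecPerp Q p := by
    rw [LinearMap.range_comp, range_subtype, map_comap_subtype]
  have hp_le : span F {p} ≤ vecPerp Q p := (span_singleton_le_iff_mem _ _).2 (self_mem_vecPerp hp)
  refine ⟨hp, U.injective_subtype.comp (injective_subtype _), fun h => ?_, ?_⟩
  · exact hpU (mem_inf.1 (hrange ▸ h)).1
  · rw [hrange, ← sup_inf_assoc_of_le _ hp_le, sup_comm, hU.sup_eq_top, top_inf_eq]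

/-- The family of the projections `S_Σ` from `⟨p⟩` into `U`, for `Σ ≠ Σ₀` in `S`. -/
def spreadProjection (S : Set (Submodule F V)) (G₀ : Submodule F V) (p : V) (U : Submodule F V) :
    Set (Submodule F U) :=
  {X | ∃ G ∈ S, G ≠ G₀ ∧ X = projFrom p U G}

namespace IsSpread

variable {S : Set (Submodule F V)} {G₀ : Submodule F V}

theorem notMem_of_ne (hS : IsSpread Q S) (hG₀ : G₀ ∈ S) (hp : p ∈ G₀) (hp0 : p ≠ 0)
    {G : Submodule F V} (hG : G ∈ S) (hne : G ≠ G₀) : p ∉ G :=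
  fun hpG => hp0 ((mem_bot F).1 (hS.2.1 G hG G₀ hG₀ hne ▸ ⟨hpG, hp⟩))

theorem existsUnique_mem_spreadProjection (hS : IsSpread Q S) (hG₀ : G₀ ∈ S) (hp : p ∈ G₀) {u : U}
    (hu : u ∉ perpIn Q p U) : ∃! X, X ∈ spreadProjection S G₀ p U ∧ u ∈ X := by
  obtain ⟨G, ⟨hG, huG⟩, huniq⟩ :=
    hS.existsUnique_mem_span_singleton_sup ((hS.1 G₀ hG₀).1 p hp) hu
  have hne : G ≠ G₀ := by
    rintro rfl
    rw [sup_eq_right.2 ((span_singleton_le_iff_mem _ _).2 hp)] at huG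
    exact hu ((hS.1 G hG).1.le_vecPerp hp huG)
  refine ⟨projFrom p U G, ⟨⟨G, hG, hne, rfl⟩, huG⟩, ?_⟩
  rintro _ ⟨⟨G', hG', -, rfl⟩, huG'⟩
  rw [huniq G' ⟨hG', huG'⟩]

end IsSpread

variable [FiniteDimensional F V]

theorem isGenerator_comap_projFrom (hf : IsPointResidue Q p (perpIncl Q p U))
    {G : Submodule F V} (hG : IsGenerator Q G) :
    IsGenerator (Q.comp (perpIncl Q p U)) ((projFrom p U G).comap (perpIn Q p U).subtype) :=
  hf.isGenerator_comap_span_singleton_sup hG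

theorem not_projFrom_le_perpIn (hf : IsPointResidue Q p (perpIncl Q p U))
    (hU : IsCompl U (span F {p})) {G : Submodule F V} (hG : IsGenerator Q G) (hpG : p ∉ G) :
    ¬ projFrom p U G ≤ perpIn Q p U := by
  intro hle
  have hcomap := (comapSubtypeEquivOfLe hle).finrank_eq
  have hw := hf.wittIndex_comp_add_one
  rw [finrank_projFrom hU hpG, hG.2, (isGenerator_comap_projFrom hf hG).2] at hcomap
  omega

theorem finrank_comap_projFrom_inf_le_one (hU : IsCompl U (span F {p})) {G G' : Submodule F V}
    (hpG : p ∉ G) (hpG' : p ∉ G') (hGG' : G ⊓ G' = ⊥) (K : Submodule F U) :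
    finrank F ↥((projFrom p U G).comap K.subtype ⊓ (projFrom p U G').comap K.subtype) ≤ 1 := by
  rw [← comap_inf, ← finrank_map_subtype_eq, map_comap_subtype]
  exact (finrank_mono inf_le_right).trans (finrank_projFrom_inf_le_one hU hpG hpG' hGG')

theorem comap_projFrom_ne (hf : IsPointResidue Q p (perpIncl Q p U))
    (hU : IsCompl U (span F {p})) {G G' : Submodule F V} (hG : IsGenerator Q G) (hpG : p ∉ G)
    (hpG' : p ∉ G') (hGG' : G ⊓ G' = ⊥) (hw : 3 ≤ wittIndex Q) :
    (projFrom p U G).comap (perpIn Q p U).subtype ≠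
      (projFrom p U G').comap (perpIn Q p U).subtype := by
  intro h
  have hle := finrank_comap_projFrom_inf_le_one hU hpG hpG' hGG' (perpIn Q p U)
  rw [← h, inf_idem, (isGenerator_comap_projFrom hf hG).2] at hle
  have := hf.wittIndex_comp_add_one
  omega

theorem isNondegOfDefect_zero_comap_projFrom_sup (hf : IsPointResidue Q p (perpIncl Q p U))
    (hU : IsCompl U (span F {p})) {G G' : Submodule F V} (hG : IsGenerator Q G)
    (hG' : IsGenerator Q G') (hpG : p ∉ G) (hpG' : p ∉ G') (hGG' : G ⊓ G' = ⊥)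
    (h : projFrom p U G ⊓ projFrom p U G' ≠ ⊥) :
    IsNondegOfDefect (V := ↥((projFrom p U G ⊔ projFrom p U G').comap (perpIn Q p U).subtype))
      ((Q.comp (perpIncl Q p U)).comp (Submodule.subtype _)) 0 := by
  have hp : p ∈ G ⊔ G' := mem_sup_of_projFrom_inf_ne_bot hU hpG hpG' hGG' h
  rw [← projFrom_sup hU, projFrom, sup_eq_right.2 ((span_singleton_le_iff_mem _ _).2 hp)]
  exact hf.isNondegOfDefect_zero_comap_sup hG hG' hGG' hp

namespace IsSpread

variable {S : Set (Submodule F V)} {G₀ : Submodule F V}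

theorem finrank_eq_and_not_le_perpIn (hS : IsSpread Q S) (hG₀ : G₀ ∈ S) (hp : p ∈ G₀)
    (hp0 : p ≠ 0) (hU : IsCompl U (span F {p})) {X : Submodule F U}
    (hX : X ∈ spreadProjection S G₀ p U) : finrank F X = wittIndex Q ∧ ¬ X ≤ perpIn Q p U := by
  obtain ⟨G, hG, hne, rfl⟩ := hX
  have hpG := hS.notMem_of_ne hG₀ hp hp0 hG hne
  exact ⟨(finrank_projFrom hU hpG).trans (hS.1 G hG).2,
    not_projFrom_le_perpIn (isPointResidue_perpIncl ((hS.1 G₀ hG₀).1 p hp) hp0 hU) hU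
      (hS.1 G hG) hpG⟩

theorem ncard_spreadProjection [Finite F] (hS : IsSpread Q S) (hG₀ : G₀ ∈ S) (hp : p ∈ G₀)
    (hp0 : p ≠ 0) (hU : IsCompl U (span F {p})) {e : ℕ} (hQ : IsNondegOfDefect Q e) :
    (spreadProjection S G₀ p U).ncard = Nat.card F ^ (wittIndex Q + e - 1) := by
  have hf := isPointResidue_perpIncl ((hS.1 G₀ hG₀).1 p hp) hp0 hU
  have hw := hf.wittIndex_comp_add_one
  have hdef := hQ.2
  have hH := hf.finrank_add_two hQ.1
  have hUV := finrank_add_eq_of_isCompl hU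
  rw [finrank_span_singleton hp0] at hUV
  have hcount :
      (spreadProjection S G₀ p U).ncard * Nat.card F ^ wittIndex (Q.comp (perpIncl Q p U)) =
        Nat.card F ^ finrank F (perpIn Q p U) :=
    ncard_mul_pow_eq_pow_finrank (by omega)
      (fun X hX => hw ▸ hS.finrank_eq_and_not_le_perpIn hG₀ hp hp0 hU hX)
      fun u => hS.existsUnique_mem_spreadProjection hG₀ hp
  have hdim : finrank F (perpIn Q p U) =
      wittIndex Q + e - 1 + wittIndex (Q.comp (perpIncl Q p U)) := by omega
  rw [hdim, pow_add] at hcount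
  exact Nat.eq_of_mul_eq_mul_right (pow_pos Nat.card_pos _) hcount

theorem isAvsp_spreadProjection [Fintype F] (hS : IsSpread Q S) (hG₀ : G₀ ∈ S) (hp : p ∈ G₀)
    (hp0 : p ≠ 0) (hU : IsCompl U (span F {p})) {e r : ℕ} (hQ : IsNondegOfDefect Q e)
    (hV : finrank F V = r + 3) (hw : 3 ≤ wittIndex Q) :
    IsAvsp e r (perpIn Q p U) (Q.comp (perpIncl Q p U)) (G₀.comap (perpIncl Q p U))
      (spreadProjection S G₀ p U) := by
  have hf := isPointResidue_perpIncl ((hS.1 G₀ hG₀).1 p hp) hp0 hU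
  have hpG {G : Submodule F V} : G ∈ S → G ≠ G₀ → p ∉ G := hS.notMem_of_ne hG₀ hp hp0
  have hinf {G G' : Submodule F V} (hG : G ∈ S) (hG' : G' ∈ S)
      (hne : projFrom p U G ≠ projFrom p U G') : G ⊓ G' = ⊥ :=
    hS.2.1 G hG G' hG' fun h => hne (h ▸ rfl)
  have hdef := hQ.2
  refine ⟨?_, fun X hX => ?_,
    fun L => existsUnique_le_of_finrank_eq_one fun u => hS.existsUnique_mem_spreadProjection hG₀ hp,
    ?_, ?_, ?_, ?_⟩
  · rw [hS.ncard_spreadProjection hG₀ hp hp0 hU hQ, Nat.card_eq_fintype_card]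
    congr 1
    omega
  · obtain ⟨hX_dim, hXH⟩ := hS.finrank_eq_and_not_le_perpIn hG₀ hp hp0 hU hX
    exact ⟨by omega, hXH⟩
  · rintro _ ⟨G, hG, hne, rfl⟩
    exact ⟨isGenerator_comap_projFrom hf (hS.1 G hG),
      hf.comap_span_singleton_sup_inf_comap (hS.2.1 G hG G₀ hG₀ hne) hp⟩
  · rintro _ ⟨G, hG, hne, rfl⟩ _ ⟨G', hG', hne', rfl⟩ hXY
    exact comap_projFrom_ne hf hU (hS.1 G hG) (hpG hG hne) (hpG hG' hne') (hinf hG hG' hXY) hw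
  · rintro _ ⟨G, hG, hne, rfl⟩ _ ⟨G', hG', hne', rfl⟩ hXY
    exact finrank_projFrom_inf_le_one hU (hpG hG hne) (hpG hG' hne') (hinf hG hG' hXY)
  · rintro _ ⟨G, hG, hne, rfl⟩ _ ⟨G', hG', hne', rfl⟩ hXY hdim
    refine isNondegOfDefect_zero_comap_projFrom_sup hf hU (hS.1 G hG) (hS.1 G' hG') (hpG hG hne)
      (hpG hG' hne') (hinf hG hG' hXY) fun h => ?_
    rw [← comap_inf, h, comap_bot, ker_subtype, finrank_bot] at hdim
    exact zero_ne_one hdim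

end IsSpread

end Avsp

theorem construction_gives_avsp {F : Type*} [Field F] [Fintype F] (e r : ℕ)
    (he : e = 0 ∨ e = 1 ∨ e = 2) (hre : e + 3 ≤ r) (hmod : r % 2 = (e + 1) % 2)
    (V : Type*) [AddCommGroup V] [Module F V] [FiniteDimensional F V]
    (hdim : Module.finrank F V = r + 3)
    (Q : QuadraticForm F V) (hQnd : QuadNondeg Q)
    (hdef : Module.finrank F V = 2 * wittIndex Q + e)
    (S : Set (Submodule F V)) (hS : IsSpread Q S)
    (G₀ : Submodule F V) (hG₀ : G₀ ∈ S)
    (p : V) (hp : p ∈ G₀) (hp0 : p ≠ 0)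
    (U : Submodule F V) (hU : Module.finrank F ↥U = r + 2) (hpU : p ∉ U) :
    let H : Submodule F ↥U := (vecPerp Q p).comap U.subtype
    let QH : QuadraticForm F ↥H := Q.comp (U.subtype ∘ₗ H.subtype)
    let Pgen : Submodule F ↥H := G₀.comap (U.subtype ∘ₗ H.subtype)
    QuadNondeg QH ∧
    Module.finrank F ↥H = r + 1 ∧
    Module.finrank F ↥H = 2 * wittIndex QH + e ∧
    IsGenerator QH Pgen ∧
    IsAvsp e r H QH Pgen
      {X : Submodule F ↥U |
        ∃ G ∈ S, G ≠ G₀ ∧ X = (Submodule.span F {p} ⊔ G).comap U.subtype} := by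
  intro H QH Pgen
  have hQ : IsNondegOfDefect Q e := ⟨hQnd, hdef⟩
  have hcompl : IsCompl U (span F {p}) :=
    isCompl_span_singleton_of_finrank_add_one (by omega) hpU
  have hf : IsPointResidue Q p (perpIncl Q p U) :=
    isPointResidue_perpIncl ((hS.1 G₀ hG₀).1 p hp) hp0 hcompl
  have hdimH : finrank F H + 2 = finrank F V := hf.finrank_add_two hQnd
  obtain ⟨hQH_nondeg, hQH_defect⟩ := hf.isNondegOfDefect_comp hQ
  exact ⟨hQH_nondeg, by omega, hQH_defect, hf.isGenerator_comap (hS.1 G₀ hG₀) hp,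
    hS.isAvsp_spreadProjection hG₀ hp hp0 hcompl hQ hdim (by omega)⟩
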